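/- arXiv:2408.03530 — 2 statements merged into one kernel-verified Lean document; each statement's English description precedes it below -/
import Mathlib

section
/- Assume RA and ER. Then the probability of defiers p_df = P(T=df) satisfies the following bounds: for every Borel set A ⊆ ℝ and each s ∈ {0,1}, p_df ≥ P(Y∈A, D=s | Z=1−s) − P(Y∈A, D=s | Z=s); and p_df ≤ min{ P(D=1 | Z=0), P(D=0 | Z=1) }. -/
open MeasureTheory ProbabilityTheory

/-- Conditional probability `P(s | t)` as a real number. -/
noncomputable def pr {Ω : Type*} [MeasurableSpace Ω] (P : Measure Ω) (t s : Set Ω) : ℝ :=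
  ((P[|t]) s).toReal

/-- Conditional expectation `E[f | t]` as a real number. -/
noncomputable def ce {Ω : Type*} [MeasurableSpace Ω] (P : Measure Ω) (t : Set Ω) (f : Ω → ℝ) : ℝ :=
  ∫ ω, f ω ∂(P[|t])

/-- Always-takers. -/
def typeA {Ω : Type*} (D0 D1 : Ω → ℝ) : Set Ω := {ω | D0 ω = 1 ∧ D1 ω = 1}
/-- Never-takers. -/
def typeN {Ω : Type*} (D0 D1 : Ω → ℝ) : Set Ω := {ω | D0 ω = 0 ∧ D1 ω = 0}
/-- Compliers. -/
def typeC {Ω : Type*} (D0 D1 : Ω → ℝ) : Set Ω := {ω | D0 ω = 0 ∧ D1 ω = 1}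
/-- Defiers. -/
def typeDF {Ω : Type*} (D0 D1 : Ω → ℝ) : Set Ω := {ω | D0 ω = 1 ∧ D1 ω = 0}

theorem pr_eq_of_indep {Ω : Type*} [MeasurableSpace Ω] (P : Measure Ω) [IsProbabilityMeasure P]
    {β : Type*} [MeasurableSpace β] (V : Ω → β) (Z : Ω → ℝ) (hZm : Measurable Z)
    (RA : IndepFun V Z P) (z : ℝ) (hz : P {ω | Z ω = z} ≠ 0) (E : Set Ω) (B : Set β)
    (hB : MeasurableSet B) (h : ∀ ω, Z ω = z → (ω ∈ E ↔ V ω ∈ B)) :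
    pr P {ω | Z ω = z} E = (P (V ⁻¹' B)).toReal := by
  have hm : MeasurableSet {ω | Z ω = z} := hZm (measurableSet_singleton z)
  have h1 : {ω | Z ω = z} ∩ E = V ⁻¹' B ∩ Z ⁻¹' {z} := by
    ext ω
    have := h ω
    simp only [Set.mem_inter_iff, Set.mem_setOf_eq, Set.mem_preimage, Set.mem_singleton_iff]
    tauto
  have h2 := RA.measure_inter_preimage_eq_mul B {z} hB (measurableSet_singleton z)
  have h3 : Z ⁻¹' {z} = {ω | Z ω = z} := rfl
  unfold pr
  rw [cond_apply hm, h1, h2, h3, mul_comm, mul_assoc, ENNReal.mul_inv_cancel hz (measure_ne_top _ _),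
    mul_one]

theorem sub_le_of_ae {Ω : Type*} [MeasurableSpace Ω] (P : Measure Ω) [IsProbabilityMeasure P]
    (S T U : Set Ω) (h : ∀ᵐ ω ∂P, ω ∈ S → ω ∈ T ∪ U) :
    (P U).toReal ≥ (P S).toReal - (P T).toReal := by
  have h1 : P S ≤ P T + P U := (measure_mono_ae h).trans (measure_union_le _ _)
  have h2 := ENNReal.toReal_mono (by finiteness) h1
  rw [ENNReal.toReal_add (by finiteness) (by finiteness)] at h2
  linarith

theorem defier_probability_bounds
    {Ω : Type*} [MeasurableSpace Ω] (P : Measure Ω) [IsProbabilityMeasure P]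
    (Y11 Y10 Y01 Y00 D0 D1 Z D Y : Ω → ℝ)
    (hY11m : Measurable Y11) (hY10m : Measurable Y10)
    (hY01m : Measurable Y01) (hY00m : Measurable Y00)
    (hD0m : Measurable D0) (hD1m : Measurable D1) (hZm : Measurable Z)
    (hD0b : ∀ ω, D0 ω = 0 ∨ D0 ω = 1) (hD1b : ∀ ω, D1 ω = 0 ∨ D1 ω = 1)
    (hZb : ∀ ω, Z ω = 0 ∨ Z ω = 1)
    (hZpos : 0 < P {ω | Z ω = 1}) (hZlt : P {ω | Z ω = 1} < 1)
    (hDdef : ∀ ω, D ω = D1 ω * Z ω + D0 ω * (1 - Z ω))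
    (hYdef : ∀ ω, Y ω = (Y11 ω * Z ω + Y10 ω * (1 - Z ω)) * D ω
        + (Y01 ω * Z ω + Y00 ω * (1 - Z ω)) * (1 - D ω))
    (RA : IndepFun (fun ω => (Y11 ω, Y10 ω, Y01 ω, Y00 ω, D0 ω, D1 ω)) Z P)
    (ER1 : ∀ᵐ ω ∂P, Y11 ω = Y10 ω) (ER0 : ∀ᵐ ω ∂P, Y01 ω = Y00 ω) :
    (∀ A : Set ℝ, MeasurableSet A → ∀ s : ℝ, s = 0 ∨ s = 1 →
      (P (typeDF D0 D1)).toReal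
        ≥ pr P {ω | Z ω = 1 - s} {ω | Y ω ∈ A ∧ D ω = s}
          - pr P {ω | Z ω = s} {ω | Y ω ∈ A ∧ D ω = s})
  ∧ (P (typeDF D0 D1)).toReal
      ≤ min (pr P {ω | Z ω = 0} {ω | D ω = 1}) (pr P {ω | Z ω = 1} {ω | D ω = 0}) := by
  have hz1 : P {ω | Z ω = 1} ≠ 0 := hZpos.ne'
  have hz0 : P {ω | Z ω = 0} ≠ 0 := by
    intro h0
    have h1 : P Set.univ ≤ P {ω | Z ω = 0} + P {ω | Z ω = 1} :=
      (measure_mono (fun ω _ => hZb ω)).trans (measure_union_le _ _)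
    rw [h0, zero_add, measure_univ] at h1
    exact absurd hZlt (not_lt.mpr h1)
  have key1 := pr_eq_of_indep P _ Z hZm RA 1 hz1
  have key0 := pr_eq_of_indep P _ Z hZm RA 0 hz0
  refine ⟨?_, ?_⟩
  · rintro A hA s (rfl | rfl)
    · rw [sub_zero,
        key1 {ω | Y ω ∈ A ∧ D ω = 0} {v | v.2.2.1 ∈ A ∧ v.2.2.2.2.2 = 0} (by measurability)
          (by
            intro ω hω
            have hd : D ω = D1 ω := by rw [hDdef, hω]; ring
            have hy := hYdef ω
            rw [hω] at hy
            simp only [Set.mem_setOf_eq, hd]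
            refine and_congr_left fun h => ?_
            rw [hy, hd, h]; ring_nf),
        key0 {ω | Y ω ∈ A ∧ D ω = 0} {v | v.2.2.2.1 ∈ A ∧ v.2.2.2.2.1 = 0} (by measurability)
          (by
            intro ω hω
            have hd : D ω = D0 ω := by rw [hDdef, hω]; ring
            have hy := hYdef ω
            rw [hω] at hy
            simp only [Set.mem_setOf_eq, hd]
            refine and_congr_left fun h => ?_
            rw [hy, hd, h]; ring_nf)]
      apply sub_le_of_ae
      filter_upwards [ER0] with ω h
      rintro ⟨ha, hd⟩
      rcases hD0b ω with h0 | h0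
      · left; exact ⟨by simpa [← h] using ha, h0⟩
      · right; exact ⟨h0, hd⟩
    · rw [sub_self,
        key0 {ω | Y ω ∈ A ∧ D ω = 1} {v | v.2.1 ∈ A ∧ v.2.2.2.2.1 = 1} (by measurability)
          (by
            intro ω hω
            have hd : D ω = D0 ω := by rw [hDdef, hω]; ring
            have hy := hYdef ω
            rw [hω] at hy
            simp only [Set.mem_setOf_eq, hd]
            refine and_congr_left fun h => ?_
            rw [hy, hd, h]; ring_nf),
        key1 {ω | Y ω ∈ A ∧ D ω = 1} {v | v.1 ∈ A ∧ v.2.2.2.2.2 = 1} (by measurability)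
          (by
            intro ω hω
            have hd : D ω = D1 ω := by rw [hDdef, hω]; ring
            have hy := hYdef ω
            rw [hω] at hy
            simp only [Set.mem_setOf_eq, hd]
            refine and_congr_left fun h => ?_
            rw [hy, hd, h]; ring_nf)]
      apply sub_le_of_ae
      filter_upwards [ER1] with ω h
      rintro ⟨ha, hd⟩
      rcases hD1b ω with h0 | h0
      · right; exact ⟨hd, h0⟩
      · left; exact ⟨by simpa [h] using ha, h0⟩
  · rw [key0 {ω | D ω = 1} {v | v.2.2.2.2.1 = 1} (by measurability)
          (by
            intro ω hω
            have hd : D ω = D0 ω := by rw [hDdef, hω]; ring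
            simp only [Set.mem_setOf_eq, hd]),
        key1 {ω | D ω = 0} {v | v.2.2.2.2.2 = 0} (by measurability)
          (by
            intro ω hω
            have hd : D ω = D1 ω := by rw [hDdef, hω]; ring
            simp only [Set.mem_setOf_eq, hd])]
    exact le_min
      (ENNReal.toReal_mono (measure_ne_top _ _) (measure_mono fun ω h => h.1))
      (ENNReal.toReal_mono (measure_ne_top _ _) (measure_mono fun ω h => h.2))
end

section
/- Assume RA, ER and MON (D₁ ≥ D₀ almost surely), and P(D=1 | Z=1) = P(D=1 | Z=0). Then p_c = p_df = 0, p_a = P(D=1), p_n = P(D=0), and the testable implications hold with equality: for every Borel set A ⊆ ℝ and each d ∈ {0,1}, P(Y∈A, D=d | Z=1) = P(Y∈A, D=d | Z=0); that is, (Y, D) is independent of Z. -/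
open MeasureTheory ProbabilityTheory

theorem pr_of_indep {Ω β : Type*} [MeasurableSpace Ω] [MeasurableSpace β] (P : Measure Ω)
    [IsProbabilityMeasure P] (X : Ω → β) (Z : Ω → ℝ) (hZ : Measurable Z) (h : IndepFun X Z P)
    (z : ℝ) (hz : P {ω | Z ω = z} ≠ 0) (B : Set β) (hB : MeasurableSet B) :
    pr P {ω | Z ω = z} (X ⁻¹' B) = (P (X ⁻¹' B)).toReal := by
  have hm : MeasurableSet {ω | Z ω = z} := hZ (measurableSet_singleton z)
  have h2 := h.measure_inter_preimage_eq_mul B {z} hB (measurableSet_singleton z)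
  have h3 : Z ⁻¹' {z} = {ω | Z ω = z} := rfl
  rw [h3] at h2
  unfold pr
  rw [cond_apply hm, Set.inter_comm, h2, mul_comm (P (X ⁻¹' B)), ← mul_assoc,
    ENNReal.inv_mul_cancel hz (measure_ne_top _ _), one_mul]

theorem pr_congr_on {Ω : Type*} [MeasurableSpace Ω] (P : Measure Ω) (t s s' : Set Ω)
    (ht : MeasurableSet t) (h : t ∩ s = t ∩ s') : pr P t s = pr P t s' := by
  unfold pr
  rw [cond_apply ht, cond_apply ht, h]

theorem degenerate_first_stage
    {Ω : Type*} [MeasurableSpace Ω] (P : Measure Ω) [IsProbabilityMeasure P]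
    (Y11 Y10 Y01 Y00 D0 D1 Z D Y : Ω → ℝ)
    (hY11m : Measurable Y11) (hY10m : Measurable Y10)
    (hY01m : Measurable Y01) (hY00m : Measurable Y00)
    (hD0m : Measurable D0) (hD1m : Measurable D1) (hZm : Measurable Z)
    (hD0b : ∀ ω, D0 ω = 0 ∨ D0 ω = 1) (hD1b : ∀ ω, D1 ω = 0 ∨ D1 ω = 1)
    (hZb : ∀ ω, Z ω = 0 ∨ Z ω = 1)
    (hZpos : 0 < P {ω | Z ω = 1}) (hZlt : P {ω | Z ω = 1} < 1)
    (hDdef : ∀ ω, D ω = D1 ω * Z ω + D0 ω * (1 - Z ω))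
    (hYdef : ∀ ω, Y ω = (Y11 ω * Z ω + Y10 ω * (1 - Z ω)) * D ω
        + (Y01 ω * Z ω + Y00 ω * (1 - Z ω)) * (1 - D ω))
    (RA : IndepFun (fun ω => (Y11 ω, Y10 ω, Y01 ω, Y00 ω, D0 ω, D1 ω)) Z P)
    (ER1 : ∀ᵐ ω ∂P, Y11 ω = Y10 ω) (ER0 : ∀ᵐ ω ∂P, Y01 ω = Y00 ω)
    (MON : ∀ᵐ ω ∂P, D0 ω ≤ D1 ω)
    (heq : pr P {ω | Z ω = 1} {ω | D ω = 1} = pr P {ω | Z ω = 0} {ω | D ω = 1}) :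
    (P (typeC D0 D1)).toReal = 0
  ∧ (P (typeDF D0 D1)).toReal = 0
  ∧ (P (typeA D0 D1)).toReal = (P {ω | D ω = 1}).toReal
  ∧ (P (typeN D0 D1)).toReal = (P {ω | D ω = 0}).toReal
  ∧ (∀ A : Set ℝ, MeasurableSet A → ∀ d : ℝ, d = 0 ∨ d = 1 →
      pr P {ω | Z ω = 1} {ω | Y ω ∈ A ∧ D ω = d}
        = pr P {ω | Z ω = 0} {ω | Y ω ∈ A ∧ D ω = d})
  ∧ IndepFun (fun ω => (Y ω, D ω)) Z P := by
  have hZ1 : P {ω | Z ω = 1} ≠ 0 := hZpos.ne'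
  have hZ1m : MeasurableSet {ω | Z ω = 1} := hZm (measurableSet_singleton 1)
  have hZ0m : MeasurableSet {ω | Z ω = 0} := hZm (measurableSet_singleton 0)
  have hZ0 : P {ω | Z ω = 0} ≠ 0 := by
    intro h0
    have hc : {ω | Z ω = 0} = {ω | Z ω = 1}ᶜ := by
      ext ω
      rcases hZb ω with h | h <;> simp [h]
    rw [hc, prob_compl_eq_zero_iff hZ1m] at h0
    exact hZlt.ne h0
  have i1 : IndepFun D1 Z P :=
    RA.comp (φ := fun v : ℝ × ℝ × ℝ × ℝ × ℝ × ℝ => v.2.2.2.2.2) (ψ := id)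
      (by fun_prop) measurable_id
  have i0 : IndepFun D0 Z P :=
    RA.comp (φ := fun v : ℝ × ℝ × ℝ × ℝ × ℝ × ℝ => v.2.2.2.2.1) (ψ := id)
      (by fun_prop) measurable_id
  have e1 := pr_of_indep P D1 Z hZm i1 1 hZ1 {1} (measurableSet_singleton 1)
  have e0 := pr_of_indep P D0 Z hZm i0 0 hZ0 {1} (measurableSet_singleton 1)
  rw [pr_congr_on P _ _ (D1 ⁻¹' {1}) hZ1m (by
      ext ω
      simp only [Set.mem_inter_iff, Set.mem_setOf_eq, Set.mem_preimage, Set.mem_singleton_iff]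
      refine and_congr_right fun h => ?_
      rw [hDdef, h]; simp), e1,
    pr_congr_on P _ _ (D0 ⁻¹' {1}) hZ0m (by
      ext ω
      simp only [Set.mem_inter_iff, Set.mem_setOf_eq, Set.mem_preimage, Set.mem_singleton_iff]
      refine and_congr_right fun h => ?_
      rw [hDdef, h]; simp), e0,
    ENNReal.toReal_eq_toReal_iff' (measure_ne_top _ _) (measure_ne_top _ _)] at heq
  have hsub : (D0 ⁻¹' {1} : Set Ω) ≤ᵐ[P] (D1 ⁻¹' {1} : Set Ω) := by
    filter_upwards [MON] with ω h h0
    have h0' : D0 ω = 1 := h0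
    show D1 ω = 1
    rcases hD1b ω with h1 | h1
    · linarith
    · exact h1
  have hae := ae_eq_of_ae_subset_of_measure_ge hsub heq.le
    (hD0m (measurableSet_singleton 1)).nullMeasurableSet (measure_ne_top _ _)
  have hDD : ∀ᵐ ω ∂P, D0 ω = D1 ω := by
    filter_upwards [hae] with ω h
    have h' : (D0 ω = 1) = (D1 ω = 1) := h
    rcases hD0b ω with h0 | h0 <;> rcases hD1b ω with h1 | h1 <;> simp_all
  have hD0 : ∀ᵐ ω ∂P, D ω = D0 ω := by
    filter_upwards [hDD] with ω h
    rw [hDdef, ← h]; ring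
  have hind : IndepFun (fun ω => (Y ω, D ω)) Z P := by
    have i := RA.comp (φ := fun v : ℝ × ℝ × ℝ × ℝ × ℝ × ℝ =>
      (v.2.1 * v.2.2.2.2.1 + v.2.2.2.1 * (1 - v.2.2.2.2.1), v.2.2.2.2.1)) (ψ := id)
      (by fun_prop) measurable_id
    refine i.congr ?_ (Filter.EventuallyEq.refl _ _)
    filter_upwards [hD0, ER1, ER0] with ω h a b
    simp only [Function.comp]
    rw [hYdef, h, a, b]
    congr 1
    ring
  refine ⟨?_, ?_, ?_, ?_, ?_, hind⟩
  · have : P (typeC D0 D1) = 0 := by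
      rw [measure_eq_zero_iff_ae_notMem]
      filter_upwards [hDD] with ω h hc
      have := hc.1; have := hc.2; linarith
    simp [this]
  · have : P (typeDF D0 D1) = 0 := by
      rw [measure_eq_zero_iff_ae_notMem]
      filter_upwards [hDD] with ω h hc
      have := hc.1; have := hc.2; linarith
    simp [this]
  · congr 1
    apply measure_congr
    filter_upwards [hDD, hD0] with ω h h'
    show (D0 ω = 1 ∧ D1 ω = 1) = (D ω = 1)
    rw [h', ← h, and_self]
  · congr 1
    apply measure_congr
    filter_upwards [hDD, hD0] with ω h h'
    show (D0 ω = 0 ∧ D1 ω = 0) = (D ω = 0)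
    rw [h', ← h, and_self]
  · intro A hA d _
    have hB : MeasurableSet (A ×ˢ ({d} : Set ℝ)) := hA.prod (measurableSet_singleton d)
    have a1 := pr_of_indep P _ Z hZm hind 1 hZ1 _ hB
    have a0 := pr_of_indep P _ Z hZm hind 0 hZ0 _ hB
    exact a1.trans a0.symm
end
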